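/- For positive integers k ≥ 2 and 1 ≤ a ≤ k and any non-negative integer n, the number of partitions of n into parts not congruent to 0, a, or -a modulo 2k+1 equals the number of partitions of n in which the multiplicity of 1 is less than a and for every i the sum of the multiplicities of i and i+1 is less than k. -/

import Mathlib

/-!
Andrews' proof of Gordon's theorem. Let `g m i` be the generating function of the partitions
satisfying Gordon's condition that have all parts larger than `m` and fewer than `i` parts equal to
`m + 1`. Sorting them by the multiplicity of `m + 1` gives
`g m (i + 1) = g m i + X ^ ((m + 1) * i) * g (m + 1) (k - i)`, with `g m 0 = 0` and `g m i → 1` as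
`m → ∞` for `0 < i`, and these relations determine `g`. An explicit alternating series, divided by
`(X; X)_∞`, satisfies the same relations. For `m = 0` it is a theta series, which Jacobi's triple
product identity turns into the product of `1 - X ^ b` over all `b ≡ 0, ±i (mod 2k + 1)`, and
dividing by `(X; X)_∞` leaves the generating function of the partitions into the other parts.

All of this takes place modulo `X ^ N` with `N` large, or rather in a ring where `x ^ N = 0`, so
that every series and product is finite and `(x; x)_N` is a unit that agrees with `(x; x)_∞`.
-/

open Finset PowerSeries

section QSeries

variable {R : Type*} [CommRing R]

/-- The `q`-Pochhammer symbol `(a; q)_n = (1 - a)(1 - aq)⋯(1 - aqⁿ⁻¹)`. In particular `(q; q)_n` is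
the `q`-factorial `(1 - q)(1 - q²)⋯(1 - qⁿ)`. -/
def qPochhammer (a q : R) (n : ℕ) : R := ∏ j ∈ range n, (1 - a * q ^ j)

theorem qPochhammer_zero (a q : R) : qPochhammer a q 0 = 1 := prod_range_zero _

theorem qPochhammer_succ (a q : R) (n : ℕ) :
    qPochhammer a q (n + 1) = qPochhammer a q n * (1 - a * q ^ n) := prod_range_succ _ _

theorem qPochhammer_succ' (a q : R) (n : ℕ) :
    qPochhammer a q (n + 1) = (1 - a) * qPochhammer (a * q) q n := by
  simp only [qPochhammer, prod_range_succ', pow_zero, mul_one, mul_assoc, ← pow_succ', mul_comm]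

theorem isUnit_qPochhammer {a : R} (ha : IsNilpotent a) (q : R) (n : ℕ) :
    IsUnit (qPochhammer a q n) :=
  IsUnit.prod_iff.mpr fun _ _ ↦ ((Commute.all _ _).isNilpotent_mul_right ha).isUnit_one_sub

theorem qPochhammer_eq_of_mul_pow_eq_zero {a q : R} {m n : ℕ} (h : a * q ^ m = 0) (hmn : m ≤ n) :
    qPochhammer a q n = qPochhammer a q m := by
  induction n, hmn using Nat.le_induction with
  | base => rfl
  | succ n hmn ih =>
    rw [qPochhammer_succ, ih, ← Nat.add_sub_cancel' hmn, pow_add, ← mul_assoc, h, zero_mul,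
      sub_zero, mul_one]

/-- The Gaussian binomial coefficient `[n, j]_q`, given by its `q`-Pascal recurrence so that it is
defined in every commutative ring, where `(q; q)_n / ((q; q)_j (q; q)_{n-j})` need not make
sense. -/
def gaussBinom (q : R) : ℕ → ℕ → R
  | _, 0 => 1
  | 0, _ + 1 => 0
  | n + 1, j + 1 => gaussBinom q n j + q ^ (j + 1) * gaussBinom q n (j + 1)

theorem gaussBinom_zero_right (q : R) (n : ℕ) : gaussBinom q n 0 = 1 := by
  cases n <;> rfl

theorem gaussBinom_succ_succ (q : R) (n j : ℕ) :
    gaussBinom q (n + 1) (j + 1) = gaussBinom q n j + q ^ (j + 1) * gaussBinom q n (j + 1) := rfl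

theorem gaussBinom_eq_zero_of_lt (q : R) : ∀ {n j : ℕ}, n < j → gaussBinom q n j = 0
  | 0, _ + 1, _ => rfl
  | n + 1, j + 1, h => by
    rw [gaussBinom_succ_succ, gaussBinom_eq_zero_of_lt q (Nat.lt_of_succ_lt_succ h),
      gaussBinom_eq_zero_of_lt q (Nat.lt_of_succ_lt h), mul_zero, add_zero]

theorem gaussBinom_self (q : R) (n : ℕ) : gaussBinom q n n = 1 := by
  induction n with
  | zero => rfl
  | succ n ih =>
    rw [gaussBinom_succ_succ, ih, gaussBinom_eq_zero_of_lt q n.lt_succ_self, mul_zero, add_zero]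

theorem gaussBinom_mul_qPochhammer_mul_qPochhammer (q : R) : ∀ j m : ℕ,
    gaussBinom q (j + m) j * qPochhammer q q j * qPochhammer q q m = qPochhammer q q (j + m)
  | 0, m => by rw [gaussBinom_zero_right, qPochhammer_zero, one_mul, one_mul, zero_add]
  | j + 1, 0 => by rw [add_zero, gaussBinom_self, qPochhammer_zero, one_mul, mul_one]
  | j + 1, m + 1 => by
    have hj := gaussBinom_mul_qPochhammer_mul_qPochhammer q j (m + 1)
    have hm := gaussBinom_mul_qPochhammer_mul_qPochhammer q (j + 1) m
    rw [show j + 1 + m = j + (m + 1) by ring] at hm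
    rw [show j + 1 + (m + 1) = j + (m + 1) + 1 by ring, gaussBinom_succ_succ]
    simp only [qPochhammer_succ _ _ j, qPochhammer_succ _ _ m,
      qPochhammer_succ _ _ (j + (m + 1))] at hj hm ⊢
    linear_combination (1 - q * q ^ j) * hj + q ^ (j + 1) * (1 - q * q ^ m) * hm

theorem qPochhammer_mul_gaussBinom_eq_one {q : R} {N j m : ℕ} (hq : q ^ N = 0) (hj : N ≤ j)
    (hm : N ≤ m) : qPochhammer q q N * gaussBinom q (j + m) j = 1 := by
  have stable {n : ℕ} (hn : N ≤ n) : qPochhammer q q n = qPochhammer q q N :=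
    qPochhammer_eq_of_mul_pow_eq_zero (by rw [hq, mul_zero]) hn
  have h := gaussBinom_mul_qPochhammer_mul_qPochhammer q j m
  rw [stable hj, stable hm, stable (hj.trans (Nat.le_add_right j m))] at h
  exact (isUnit_qPochhammer ⟨N, hq⟩ q N).mul_right_cancel (by linear_combination h)

theorem choose_two_succ (n : ℕ) : (n + 1).choose 2 = n.choose 2 + n := by
  rw [Nat.choose_succ_succ' n 1, Nat.choose_one_right, add_comm]

theorem sum_gaussBinom_succ_mul (q : R) (n : ℕ) (t : ℕ → R) :
    ∑ j ∈ range (n + 2), gaussBinom q (n + 1) j * t j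
      = ∑ j ∈ range (n + 1), gaussBinom q n j * (t (j + 1) + q ^ j * t j) := by
  have extend : ∑ j ∈ range (n + 1), gaussBinom q n j * (q ^ j * t j)
      = ∑ j ∈ range (n + 1), gaussBinom q n (j + 1) * (q ^ (j + 1) * t (j + 1)) + t 0 := by
    rw [sum_range_succ', sum_range_succ _ n, gaussBinom_eq_zero_of_lt q n.lt_succ_self,
      gaussBinom_zero_right, zero_mul, add_zero, pow_zero, one_mul, one_mul]
  simp only [mul_add, sum_add_distrib]
  rw [extend, sum_range_succ', gaussBinom_zero_right, one_mul, ← add_assoc, ← sum_add_distrib]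
  refine congrArg (· + t 0) (sum_congr rfl fun j _ ↦ ?_)
  rw [gaussBinom_succ_succ]
  ring

/-- The `q`-binomial theorem. -/
theorem qPochhammer_eq_sum_gaussBinom (a q : R) (n : ℕ) :
    qPochhammer a q n
      = ∑ j ∈ range (n + 1), gaussBinom q n j * ((-a) ^ j * q ^ j.choose 2) := by
  induction n generalizing a with
  | zero => simp [qPochhammer_zero, gaussBinom_zero_right]
  | succ n ih =>
    rw [qPochhammer_succ', ih, mul_sum, sum_gaussBinom_succ_mul]
    refine sum_congr rfl fun j _ ↦ ?_
    rw [choose_two_succ, neg_mul_eq_neg_mul, mul_pow]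
    ring

/-- The term `(-w)^l (zw)^{l(l-1)/2}` of the theta series in Jacobi's triple product identity.
As `z` need not be invertible, it is rewritten as `(-z)^{-l} (zw)^{l(l+1)/2}` for `l < 0`. -/
def thetaTerm (z w : R) (l : ℤ) : R :=
  (-z) ^ (-l).toNat * (-w) ^ l.toNat * (z * w) ^ l.natAbs.choose 2

theorem thetaTerm_natCast (z w : R) (n : ℕ) :
    thetaTerm z w n = (-w) ^ n * (z * w) ^ n.choose 2 := by
  simp [thetaTerm]

theorem thetaTerm_neg_natCast (z w : R) (n : ℕ) :
    thetaTerm z w (-n) = (-z) ^ n * (z * w) ^ n.choose 2 := by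
  simp [thetaTerm]

theorem mul_pow_mul_thetaTerm_sub (z w : R) (j m : ℕ) :
    z * (z * w) ^ m * thetaTerm z w (j - m)
      = -((z * w) ^ j * thetaTerm z w (j - (m + 1 : ℕ))) := by
  rcases le_or_gt j m with h | h
  · obtain ⟨s, rfl⟩ := Nat.exists_eq_add_of_le h
    rw [show (j : ℤ) - (j + s : ℕ) = -s by lia,
      show (j : ℤ) - (j + s + 1 : ℕ) = -(s + 1 : ℕ) by lia,
      thetaTerm_neg_natCast, thetaTerm_neg_natCast, choose_two_succ]
    ring
  · obtain ⟨s, rfl⟩ := Nat.exists_eq_add_of_lt h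
    rw [show ((m + s + 1 : ℕ) : ℤ) - m = (s + 1 : ℕ) by lia,
      show ((m + s + 1 : ℕ) : ℤ) - (m + 1 : ℕ) = s by lia,
      thetaTerm_natCast, thetaTerm_natCast, choose_two_succ]
    ring

/-- A finite form of Jacobi's triple product identity. -/
theorem qPochhammer_mul_qPochhammer_eq_sum_thetaTerm (z w : R) (m n : ℕ) :
    qPochhammer z (z * w) m * qPochhammer w (z * w) n
      = ∑ j ∈ range (m + n + 1), gaussBinom (z * w) (m + n) j * thetaTerm z w (j - m) := by
  induction m with
  | zero =>
    rw [qPochhammer_zero, one_mul, zero_add, qPochhammer_eq_sum_gaussBinom w]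
    simp only [Nat.cast_zero, sub_zero, thetaTerm_natCast]
  | succ m ih =>
    rw [qPochhammer_succ, mul_right_comm, ih, sum_mul, add_right_comm m 1 n,
      sum_gaussBinom_succ_mul]
    refine sum_congr rfl fun j _ ↦ ?_
    rw [show ((j + 1 : ℕ) : ℤ) - (m + 1 : ℕ) = j - m by lia]
    linear_combination
      -gaussBinom (z * w) (m + n) j * mul_pow_mul_thetaTerm_sub z w j m

theorem sum_range_two_mul_sub_natCast {M : Type*} [AddCommMonoid M] (f : ℤ → M) (n : ℕ) :
    ∑ j ∈ range (2 * n), f (j - n) = ∑ j ∈ range n, (f j + f (-(j + 1 : ℕ))) := by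
  rw [two_mul, sum_range_add, ← sum_range_reflect, add_comm, ← sum_add_distrib]
  refine sum_congr rfl fun j hj ↦ ?_
  congr 2 <;> grind

theorem thetaTerm_eq_zero {z w : R} {N : ℕ} (hz : z ^ N = 0) (hw : w ^ N = 0) {l : ℤ}
    (hl : N ≤ l.natAbs) : thetaTerm z w l = 0 := by
  obtain ⟨n, rfl | rfl⟩ := l.eq_nat_or_neg
  · rw [thetaTerm_natCast, neg_pow, pow_eq_zero_of_le (by simpa using hl) hw, mul_zero, zero_mul]
  · rw [thetaTerm_neg_natCast, neg_pow, pow_eq_zero_of_le (by simpa using hl) hz, mul_zero,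
      zero_mul]

/-- Jacobi's triple product identity for nilpotent `z` and `w`. -/
theorem qPochhammer_mul_qPochhammer_mul_qPochhammer_eq_sum_thetaTerm {z w : R} {N : ℕ}
    (hz : z ^ N = 0) (hw : w ^ N = 0) :
    qPochhammer (z * w) (z * w) N * (qPochhammer z (z * w) N * qPochhammer w (z * w) N)
      = ∑ n ∈ range N, (thetaTerm z w n + thetaTerm z w (-(n + 1 : ℕ))) := by
  have hq : (z * w) ^ N = 0 := by rw [mul_pow, hz, zero_mul]
  have stable (a : R) : qPochhammer a (z * w) (2 * N) = qPochhammer a (z * w) N :=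
    qPochhammer_eq_of_mul_pow_eq_zero (by rw [hq, mul_zero]) (by omega)
  have term_eq {j : ℕ} (hj : j ∈ range (2 * N + 2 * N + 1)) :
      qPochhammer (z * w) (z * w) N
        * (gaussBinom (z * w) (2 * N + 2 * N) j * thetaTerm z w (j - (2 * N : ℕ)))
      = thetaTerm z w (j - (2 * N : ℕ)) := by
    rw [← mul_assoc]
    by_cases h : N ≤ ((j : ℤ) - (2 * N : ℕ)).natAbs
    · rw [thetaTerm_eq_zero hz hw h, mul_zero]
    · obtain ⟨m, hm⟩ : ∃ m, 2 * N + 2 * N = j + m := ⟨2 * N + 2 * N - j, by grind⟩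
      rw [hm, qPochhammer_mul_gaussBinom_eq_one hq (by lia) (by lia), one_mul]
  calc qPochhammer (z * w) (z * w) N * (qPochhammer z (z * w) N * qPochhammer w (z * w) N)
      = ∑ j ∈ range (2 * (2 * N) + 1), thetaTerm z w (j - (2 * N : ℕ)) := by
        rw [← stable z, ← stable w, qPochhammer_mul_qPochhammer_eq_sum_thetaTerm, mul_sum,
          sum_congr rfl fun j ↦ term_eq, ← two_mul]
    _ = ∑ n ∈ range (2 * N), (thetaTerm z w n + thetaTerm z w (-(n + 1 : ℕ))) := by
        rw [sum_range_succ, sum_range_two_mul_sub_natCast (thetaTerm z w),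
          thetaTerm_eq_zero hz hw (by lia), add_zero]
    _ = ∑ n ∈ range N, (thetaTerm z w n + thetaTerm z w (-(n + 1 : ℕ))) := by
        refine (sum_subset (range_mono (by omega)) fun n _ hn ↦ ?_).symm
        have hn : N ≤ n := by simpa using hn
        rw [thetaTerm_eq_zero hz hw (by lia), thetaTerm_eq_zero hz hw (by lia), add_zero]

end QSeries

section GordonSum

variable {R : Type*} [CommRing R]

/-- The first `N` terms of the alternating series of Andrews which, for `i ≤ k`, is `(x; x)_∞` times
the generating function of the partitions counted in Gordon's theorem that have all parts larger
than `m` and fewer than `i` parts equal to `m + 1`. -/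
def gordonSum (x : R) (N k m i : ℕ) : R :=
  ∑ n ∈ range N, (-1) ^ n * x ^ (m * k * n + k * n ^ 2 + (k - i) * n + (n + 1).choose 2)
    * (1 - x ^ ((m + 2 * n + 1) * i)) * qPochhammer (x ^ (n + 1)) x m

theorem gordonSum_zero_right (x : R) (N k m : ℕ) : gordonSum x N k m 0 = 0 := by
  simp [gordonSum]

theorem gordonSum_succ {x : R} {N : ℕ} (hx : x ^ N = 0) {k m i : ℕ} (hi : i < k) :
    gordonSum x N k m (i + 1)
      = gordonSum x N k m i + x ^ ((m + 1) * i) * gordonSum x N k (m + 1) (k - i) := by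
  obtain ⟨c, rfl⟩ := Nat.exists_eq_add_of_lt hi
  -- The difference of the `n`-th terms of the two sides is `U (n + 1) - U n`.
  let U (n : ℕ) : R := (-1) ^ (n + 1)
    * x ^ (m * (i + c + 1) * n + (i + c + 1) * n ^ 2 + c * n + (n + 1).choose 2)
    * qPochhammer (x ^ (n + 1)) x m * (1 - x ^ n)
  have telescope : ∑ n ∈ range N, (U (n + 1) - U n) = 0 := by
    have hN : U N = 0 := by simp [U, choose_two_succ, pow_add, hx]
    rw [sum_range_sub, hN, zero_sub, neg_eq_zero]
    simp [U]
  rw [← sub_eq_zero, ← telescope, gordonSum, gordonSum, gordonSum, mul_sum, ← sum_add_distrib,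
    ← sum_sub_distrib]
  refine sum_congr rfl fun n _ ↦ ?_
  have shift : (1 - x ^ (n + 1)) * qPochhammer (x ^ (n + 1 + 1)) x m
      = qPochhammer (x ^ (n + 1)) x m * (1 - x ^ (n + 1) * x ^ m) := by
    rw [← qPochhammer_succ, qPochhammer_succ', pow_succ x (n + 1)]
  simp only [U]
  rw [mul_assoc _ (qPochhammer (x ^ (n + 1 + 1)) x m),
    mul_comm (qPochhammer _ x m) (1 - x ^ (n + 1)), shift, qPochhammer_succ,
    show i + c + 1 - (i + 1) = c by omega, show i + c + 1 - i = c + 1 by omega,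
    show i + c + 1 - (c + 1) = i by omega, choose_two_succ (n + 1)]
  ring

theorem gordonSum_self {x : R} {N : ℕ} (hx : x ^ N = 0) (hN : 0 < N) {k i : ℕ} (hk : 0 < k)
    (hi : 0 < i) : gordonSum x N k N i = qPochhammer x x N := by
  rw [gordonSum, sum_eq_single_of_mem 0 (mem_range.mpr hN)]
  · have : x ^ ((N + 1) * i) = 0 := by
      rw [add_mul, pow_add, pow_mul, hx, zero_pow hi.ne', zero_mul]
    simp [this]
  · intro n _ hn
    have : x ^ (N * k * n) = 0 := by
      rw [mul_assoc, pow_mul, hx, zero_pow (by positivity)]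
    simp [pow_add, this]

theorem gordonSum_zero_left {x : R} {N : ℕ} (hx : x ^ N = 0) {k a : ℕ} (ha : 1 ≤ a) (hak : a ≤ k) :
    gordonSum x N k 0 a = qPochhammer (x ^ (2 * k + 1)) (x ^ (2 * k + 1)) N
      * (qPochhammer (x ^ a) (x ^ (2 * k + 1)) N
        * qPochhammer (x ^ (2 * k + 1 - a)) (x ^ (2 * k + 1)) N) := by
  have pow_pow_eq_zero {b : ℕ} (hb : b ≠ 0) : (x ^ b) ^ N = 0 := by
    rw [pow_right_comm, hx, zero_pow hb]
  have jacobi := qPochhammer_mul_qPochhammer_mul_qPochhammer_eq_sum_thetaTerm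
    (pow_pow_eq_zero (b := a) (by omega)) (pow_pow_eq_zero (b := 2 * k + 1 - a) (by omega))
  rw [← pow_add, Nat.add_sub_cancel' (by omega)] at jacobi
  rw [jacobi, gordonSum]
  refine sum_congr rfl fun n _ ↦ ?_
  obtain ⟨c, rfl⟩ := Nat.exists_eq_add_of_le hak
  have sq_eq : n ^ 2 = 2 * n.choose 2 + n := by
    rw [Nat.choose_two_right, Nat.mul_div_cancel' n.even_mul_pred_self.two_dvd]
    cases n <;> grind
  rw [thetaTerm_natCast, thetaTerm_neg_natCast, ← pow_add, Nat.add_sub_cancel' (by omega),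
    Nat.add_sub_cancel_left, show 2 * (a + c) + 1 - a = a + 2 * c + 1 by omega, qPochhammer_zero,
    sq_eq, choose_two_succ]
  ring

end GordonSum

section PartitionSeries

/-- The generating function `∑ₙ P(n) Xⁿ`, where `P(n)` counts the partitions of `n` whose multiset
of parts satisfies the predicate `P`. -/
noncomputable def partitionSeries (P : Multiset ℕ → Prop) : ℤ⟦X⟧ :=
  PowerSeries.mk fun n ↦ ({p : n.Partition | P p.parts}.ncard : ℤ)

theorem coeff_partitionSeries (P : Multiset ℕ → Prop) (n : ℕ) :
    coeff n (partitionSeries P) = ({p : n.Partition | P p.parts}.ncard : ℤ) := coeff_mk _ _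

theorem ncard_partition_le_count_eq (P : Multiset ℕ → Prop) {d : ℕ} (hd : 0 < d) (n r : ℕ) :
    {p : (n + d * r).Partition | P p.parts ∧ r ≤ p.parts.count d}.ncard
      = {p : n.Partition | P (p.parts + Multiset.replicate r d)}.ncard := by
  let addParts (p : n.Partition) : (n + d * r).Partition :=
    { parts := p.parts + Multiset.replicate r d
      parts_pos := fun {b} hb ↦ by
        rcases Multiset.mem_add.mp hb with hb | hb
        · exact p.parts_pos hb
        · exact Multiset.eq_of_mem_replicate hb ▸ hd
      parts_sum := by simp [p.parts_sum, mul_comm] }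
  symm
  refine Set.ncard_congr (fun p _ ↦ addParts p) (fun p hp ↦ ⟨hp, by simp [addParts]⟩)
    (fun p q _ _ h ↦ ?_) fun p ⟨hP, hr⟩ ↦ ?_
  · exact Nat.Partition.ext (add_right_cancel (congrArg Nat.Partition.parts h))
  · obtain ⟨t, ht⟩ := le_iff_exists_add'.mp (Multiset.le_count_iff_replicate_le.mp hr)
    have t_sum : t.sum = n := by
      have := p.parts_sum
      rw [ht, Multiset.sum_add, Multiset.sum_replicate, smul_eq_mul, mul_comm] at this
      exact Nat.add_right_cancel this
    exact ⟨⟨t, fun hb ↦ p.parts_pos (ht ▸ Multiset.mem_add.mpr (.inl hb)), t_sum⟩,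
      Set.mem_ofPred.mpr (ht ▸ hP), Nat.Partition.ext ht.symm⟩

theorem partitionSeries_eq_add (P : Multiset ℕ → Prop) {d : ℕ} (hd : 0 < d) (r : ℕ) :
    partitionSeries P = partitionSeries (fun s ↦ P s ∧ s.count d < r)
      + X ^ (d * r) * partitionSeries (fun s ↦ P (s + Multiset.replicate r d)) := by
  ext n
  rw [map_add, coeff_X_pow_mul']
  simp only [coeff_partitionSeries]
  have split : {p : n.Partition | P p.parts}.ncard
      = {p : n.Partition | P p.parts ∧ p.parts.count d < r}.ncard
        + {p : n.Partition | P p.parts ∧ r ≤ p.parts.count d}.ncard := by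
    rw [← Set.ncard_inter_add_ncard_sdiff_eq_ncard {p : n.Partition | P p.parts}
      {p | p.parts.count d < r}]
    congr 2
    ext p
    simp
  rw [split, Nat.cast_add]
  congr 1
  split_ifs with h
  · obtain ⟨m, rfl⟩ := Nat.exists_eq_add_of_le' h
    rw [ncard_partition_le_count_eq P hd, Nat.add_sub_cancel]
  · rw [Nat.cast_eq_zero, Set.ncard_eq_zero, Set.eq_empty_iff_forall_notMem]
    rintro p ⟨-, hr⟩
    obtain ⟨t, ht⟩ := le_iff_exists_add.mp (Multiset.le_count_iff_replicate_le.mp hr)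
    refine h (Nat.le.intro (k := t.sum) ?_)
    rw [← p.parts_sum, ht, Multiset.sum_add, Multiset.sum_replicate, smul_eq_mul, mul_comm]

theorem X_pow_dvd_partitionSeries_sub_one {P : Multiset ℕ → Prop} {N : ℕ} (h0 : P 0)
    (hP : ∀ s, P s → ∀ b ∈ s, 0 < b → N ≤ b) : X ^ N ∣ partitionSeries P - 1 := by
  rw [X_pow_dvd_iff]
  intro n hn
  rw [map_sub, coeff_partitionSeries, coeff_one, sub_eq_zero]
  split_ifs with hn0
  · subst hn0
    simp [Nat.Partition.partition_zero_parts, h0]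
  · rw [Nat.cast_eq_zero, Set.ncard_eq_zero, Set.eq_empty_iff_forall_notMem]
    intro p hp
    obtain ⟨b, hb⟩ : ∃ b, b ∈ p.parts := by
      refine Multiset.exists_mem_of_ne_zero fun h ↦ hn0 ?_
      rw [← p.parts_sum, h, Multiset.sum_zero]
    exact hn.not_ge ((hP _ hp b hb (p.parts_pos hb)).trans (Nat.Partition.le_of_mem_parts hb))

theorem map_partitionSeries_eq_one {R : Type*} [CommRing R] {φ : ℤ⟦X⟧ →+* R} {N : ℕ}
    (hφ : φ X ^ N = 0) {P : Multiset ℕ → Prop} (h0 : P 0) (hP : ∀ s, P s → ∀ b ∈ s, 0 < b → N ≤ b) :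
    φ (partitionSeries P) = 1 := by
  have := map_dvd φ (X_pow_dvd_partitionSeries_sub_one h0 hP)
  rwa [map_pow, hφ, zero_dvd_iff, map_sub, map_one, sub_eq_zero] at this

end PartitionSeries

section RestrictedParts

theorem partitionSeries_forall_mul_one_sub_X_pow {p : ℕ → Prop} {d : ℕ} (hd : 0 < d) (hp : p d) :
    partitionSeries (fun s ↦ ∀ b ∈ s, p b) * (1 - X ^ d)
      = partitionSeries (fun s ↦ ∀ b ∈ s, p b ∧ b ≠ d) := by
  have h := partitionSeries_eq_add (fun s ↦ ∀ b ∈ s, p b) hd 1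
  have without (s : Multiset ℕ) :
      ((∀ b ∈ s, p b) ∧ s.count d < 1) = ∀ b ∈ s, p b ∧ b ≠ d := by
    rw [Nat.lt_one_iff, Multiset.count_eq_zero]
    grind
  have with_part (s : Multiset ℕ) :
      (∀ b ∈ s + Multiset.replicate 1 d, p b) = ∀ b ∈ s, p b := by
    simp [or_imp, forall_and, hp]
  simp only [without, with_part, mul_one] at h
  linear_combination h

theorem partitionSeries_forall_mul_prod_one_sub_X_pow {p : ℕ → Prop} (D : Finset ℕ)
    (hD : ∀ d ∈ D, 0 < d ∧ p d) :
    partitionSeries (fun s ↦ ∀ b ∈ s, p b) * ∏ d ∈ D, (1 - X ^ d)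
      = partitionSeries (fun s ↦ ∀ b ∈ s, p b ∧ b ∉ D) := by
  induction D using Finset.induction_on with
  | empty => simp
  | insert d D hd ih =>
    obtain ⟨⟨hd0, hpd⟩, hD⟩ := forall_mem_insert _ _ _ |>.mp hD
    rw [prod_insert hd, mul_left_comm, ih hD, mul_comm,
      partitionSeries_forall_mul_one_sub_X_pow hd0 ⟨hpd, hd⟩]
    simp only [mem_insert, not_or, and_comm, and_left_comm, ne_eq]

theorem prod_range_mul {M : Type*} [CommMonoid M] (f : ℕ → M) (K N : ℕ) :
    ∏ j ∈ range (K * N), f j = ∏ r ∈ range K, ∏ j ∈ range N, f (r + j * K) := by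
  induction N with
  | zero => simp
  | succ N ih =>
    simp only [Nat.mul_succ, prod_range_add, ih, prod_range_succ _ N, prod_mul_distrib]
    simp only [add_comm, mul_comm]

variable {R : Type*} [CommRing R]

theorem prod_range_qPochhammer_pow (x : R) (K N : ℕ) :
    ∏ r ∈ range K, qPochhammer (x ^ (r + 1)) (x ^ K) N = qPochhammer x x (K * N) := by
  rw [qPochhammer, prod_range_mul]
  refine prod_congr rfl fun r _ ↦ prod_congr rfl fun j _ ↦ ?_
  ring

theorem map_partitionSeries_forall_mul_prod_qPochhammer {φ : ℤ⟦X⟧ →+* R} {N : ℕ}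
    (hφ : φ X ^ N = 0) {p : ℕ → Prop} [DecidablePred p] {K : ℕ} (hK : 0 < K)
    (hp : Function.Periodic p K) :
    φ (partitionSeries fun s ↦ ∀ b ∈ s, p b)
      * ∏ r ∈ range K with p (r + 1), qPochhammer (φ X ^ (r + 1)) (φ X ^ K) N = 1 := by
  let D : Finset ℕ := {j ∈ range (K * N) | p (j + 1)}.image (· + 1)
  have product : ∏ r ∈ range K with p (r + 1), qPochhammer (φ X ^ (r + 1)) (φ X ^ K) N
      = φ (∏ d ∈ D, (1 - X ^ d)) := by
    simp only [D, prod_image (add_left_injective 1).injOn, prod_filter, prod_range_mul, map_prod]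
    refine prod_congr rfl fun r _ ↦ ?_
    have periodic (j : ℕ) : p (r + j * K + 1) = p (r + 1) := by
      rw [add_right_comm]
      exact hp.nat_mul j (r + 1)
    simp only [periodic]
    split_ifs
    · simp only [qPochhammer, map_sub, map_one, map_pow, ← pow_mul, ← pow_add]
      refine prod_congr rfl fun j _ ↦ ?_
      ring
    · simp
  rw [product, ← map_mul, partitionSeries_forall_mul_prod_one_sub_X_pow D (by grind)]
  refine map_partitionSeries_eq_one hφ (by simp) fun s hs b hb hb0 ↦ ?_
  have := Nat.le_mul_of_pos_left N hK
  by_contra! hbN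
  exact (hs b hb).2 (mem_image.mpr ⟨b - 1, by grind, by omega⟩)

end RestrictedParts

section Gordon

/-- Gordon's condition on a multiset of parts, relative to a lower bound: all parts exceed `m`,
fewer than `i` of them equal `m + 1`, and fewer than `k` of them lie in any `{j, j + 1}` with
`m < j`. The partitions of Gordon's theorem are those with `m = 0` and `i = a`. -/
def IsGordon (k m i : ℕ) (s : Multiset ℕ) : Prop :=
  (∀ b ∈ s, m < b) ∧ s.count (m + 1) < i ∧ ∀ j, m < j → s.count j + s.count (j + 1) < k

theorem isGordon_succ_and_count_lt_iff {k m i : ℕ} {s : Multiset ℕ} :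
    IsGordon k m (i + 1) s ∧ s.count (m + 1) < i ↔ IsGordon k m i s := by
  unfold IsGordon
  grind

theorem isGordon_succ_add_replicate_iff {k m i : ℕ} (hi : i < k) {s : Multiset ℕ} :
    IsGordon k m (i + 1) (s + Multiset.replicate i (m + 1)) ↔ IsGordon k (m + 1) (k - i) s := by
  have count_add (j : ℕ) : (s + Multiset.replicate i (m + 1)).count j
      = s.count j + if m + 1 = j then i else 0 := by
    rw [Multiset.count_add, Multiset.count_replicate]
  simp only [IsGordon, count_add, Multiset.mem_add, Multiset.mem_replicate]
  constructor
  · rintro ⟨above, first, consecutive⟩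
    have notMem : m + 1 ∉ s := Multiset.count_eq_zero.mp (by grind)
    exact ⟨by grind, by grind, by grind⟩
  · rintro ⟨above, first, consecutive⟩
    have notMem : s.count (m + 1) = 0 := Multiset.count_eq_zero.mpr (by grind)
    exact ⟨by grind, by grind, by grind⟩

theorem partitionSeries_isGordon_zero (k m : ℕ) : partitionSeries (IsGordon k m 0) = 0 := by
  ext n
  simp [coeff_partitionSeries, IsGordon]

theorem partitionSeries_isGordon_succ {k i : ℕ} (hi : i < k) (m : ℕ) :
    partitionSeries (IsGordon k m (i + 1)) = partitionSeries (IsGordon k m i)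
      + X ^ ((m + 1) * i) * partitionSeries (IsGordon k (m + 1) (k - i)) := by
  rw [partitionSeries_eq_add _ m.succ_pos i]
  simp only [Nat.succ_eq_add_one, isGordon_succ_and_count_lt_iff,
    isGordon_succ_add_replicate_iff hi]

variable {R : Type*} [CommRing R] {φ : ℤ⟦X⟧ →+* R} {N : ℕ}

theorem gordonSum_eq_qPochhammer_mul_map_partitionSeries (hφ : φ X ^ N = 0) (hN : 0 < N)
    {k m i : ℕ} (hm : m ≤ N) (hi : i ≤ k) :
    gordonSum (φ X) N k m i
      = qPochhammer (φ X) (φ X) N * φ (partitionSeries (IsGordon k m i)) := by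
  induction hm using Nat.decreasingInduction generalizing i with
  | self =>
    rcases i.eq_zero_or_pos with rfl | hi0
    · rw [gordonSum_zero_right, partitionSeries_isGordon_zero, map_zero, mul_zero]
    · have hk : 0 < k := hi0.trans_le hi
      rw [gordonSum_self hφ hN hk hi0, map_partitionSeries_eq_one hφ (by simp [IsGordon, *])
        fun s hs b hb _ ↦ (hs.1 b hb).le, mul_one]
  | of_succ m _ ih_m =>
    induction i with
    | zero => rw [gordonSum_zero_right, partitionSeries_isGordon_zero, map_zero, mul_zero]
    | succ i ih_i =>
      rw [gordonSum_succ hφ hi, ih_i (by omega), ih_m (k.sub_le i),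
        partitionSeries_isGordon_succ hi, map_add, map_mul, map_pow]
      ring

theorem gordonSum_zero_left_eq_qPochhammer_mul_map_partitionSeries (hφ : φ X ^ N = 0) {k a : ℕ}
    (ha : 1 ≤ a) (hak : a ≤ k) :
    gordonSum (φ X) N k 0 a = qPochhammer (φ X) (φ X) N
      * φ (partitionSeries fun s ↦ ∀ b ∈ s, b % (2 * k + 1) ≠ 0 ∧ b % (2 * k + 1) ≠ a
        ∧ b % (2 * k + 1) ≠ 2 * k + 1 - a) := by
  set K := 2 * k + 1 with hK
  let p (b : ℕ) : Prop := b % K ≠ 0 ∧ b % K ≠ a ∧ b % K ≠ K - a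
  have hp : Function.Periodic p K := fun b ↦ by simp [p]
  let f (r : ℕ) : R := qPochhammer (φ X ^ (r + 1)) (φ X ^ K) N
  have residues : {r ∈ range K | ¬p (r + 1)} = {K - 1, a - 1, K - a - 1} := by
    ext r
    rcases Nat.lt_or_ge (r + 1) K with h | h
    · have := Nat.mod_eq_of_lt h
      grind
    · grind [Nat.mod_self]
  have excluded : ∏ r ∈ range K with ¬p (r + 1), f r = gordonSum (φ X) N k 0 a := by
    rw [gordonSum_zero_left hφ ha hak, residues, prod_insert (by grind), prod_pair (by omega)]
    simp only [f, Nat.sub_add_cancel ha, Nat.sub_add_cancel (show 1 ≤ K by omega),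
      Nat.sub_add_cancel (show 1 ≤ K - a by omega)]
    rw [hK]
  have total : qPochhammer (φ X) (φ X) N
      = (∏ r ∈ range K with p (r + 1), f r) * gordonSum (φ X) N k 0 a := by
    rw [← excluded, prod_filter_mul_prod_filter_not, prod_range_qPochhammer_pow]
    exact (qPochhammer_eq_of_mul_pow_eq_zero (by rw [hφ, mul_zero])
      (Nat.le_mul_of_pos_left N (by omega))).symm
  have := map_partitionSeries_forall_mul_prod_qPochhammer hφ (by omega) hp
  rw [total]
  linear_combination -gordonSum (φ X) N k 0 a * this

end Gordon

/-- Rogers–Ramanujan–Gordon: for `2 ≤ k`, `1 ≤ a ≤ k`, the number of partitions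
of `n` into parts not congruent to `0, ±a (mod 2k+1)` equals the number of
partitions of `n` in which `1` appears fewer than `a` times and, for every `i ≥ 1`,
the multiplicities of `i` and `i+1` sum to less than `k`. -/
theorem rogers_ramanujan_gordon (k a n : ℕ) (hk : 2 ≤ k) (ha : 1 ≤ a) (hak : a ≤ k) :
    Set.ncard {p : n.Partition | ∀ b ∈ p.parts,
        b % (2 * k + 1) ≠ 0 ∧ b % (2 * k + 1) ≠ a ∧ b % (2 * k + 1) ≠ 2 * k + 1 - a}
      = Set.ncard {p : n.Partition | p.parts.count 1 < a ∧
          ∀ i : ℕ, 1 ≤ i → p.parts.count i + p.parts.count (i + 1) < k} := by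
  let φ := Ideal.Quotient.mk (Ideal.span {(X : ℤ⟦X⟧) ^ (n + 1)})
  have hφ : φ X ^ (n + 1) = 0 := by
    rw [← map_pow]
    exact Ideal.Quotient.eq_zero_iff_mem.mpr (Ideal.mem_span_singleton_self _)
  have series_eq := (isUnit_qPochhammer ⟨n + 1, hφ⟩ (φ X) (n + 1)).mul_left_cancel <|
    (gordonSum_zero_left_eq_qPochhammer_mul_map_partitionSeries hφ ha hak).symm.trans
      (gordonSum_eq_qPochhammer_mul_map_partitionSeries hφ n.succ_pos n.succ.zero_le hak)
  rw [Ideal.Quotient.mk_eq_mk_iff_sub_mem, Ideal.mem_span_singleton, X_pow_dvd_iff] at series_eq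
  have coeff_eq := series_eq n n.lt_succ_self
  rw [map_sub, sub_eq_zero, coeff_partitionSeries, coeff_partitionSeries, Nat.cast_inj] at coeff_eq
  rw [coeff_eq]
  congr 1 with p
  simpa [IsGordon, Nat.succ_le_iff] using fun _ _ _ ↦ p.parts_pos
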